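/- arXiv:1702.04969 — 2 statements merged into one kernel-verified Lean document; each statement's English description precedes it below -/
import Mathlib

section
/- Let 1 < p ≤ q < ∞ and let p' = p/(p-1). Let u, v : (0,∞) → [0,∞) be measurable. Then there exists a constant c > 0 such that (∫₀^∞ [u(x) ∫_x^∞ f(t) dt]^{q} dx)^{1/q} ≤ c (∫₀^∞ [f(x) v(x)]^{p} dx)^{1/p} holds for all non-negative measurable f : (0,∞) → [0,∞) if and only if sup_{r>0} (∫₀^r u(x)^{q} dx)^{1/q} (∫_r^∞ v(x)^{-p'} dx)^{1/p'} < ∞. -/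
open MeasureTheory Set ENNReal

/-!
Absorb the weight `u ^ q` into the outer measure `μ`, and let `ρ` be the measure with density `f`.

*Sufficiency.* Cut the line into the dyadic layers of `x ↦ ρ (Ioi x)` to integrate against `μ`, and
into those of `t ↦ ρ (Ici t)` to distribute the mass of `f`; with the closed tail, the bound
`ρ {t | ρ (Ici t) ≤ a} ≤ a` holds even if `ρ` has atoms. By this bound, at least half of the mass
`ρ (Ioi y)` of the tail at a point `y` of the `k`-th layer is carried by the points `t > y` with
`ρ (Ici t) > 2 ^ (k - 1)`, which lie in the layers `k` and `k - 1`. Hölder's inequality on that set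
bounds `2 ^ (k + 1) * μ (Iic y) ^ (1 / q)` by a multiple of `(∫ (f * v) ^ p) ^ (1 / p)` over these
two layers, and `p ≤ q` allows the `q`-th powers of these bounds to be summed over `k`.

*Necessity.* Test the inequality on integrable functions `g ≤ v ^ (-p')` supported in `Ioi r`, for
which `∫ (g * v) ^ p ≤ ∫ g`.
-/

section TailMeasurability

variable {X : Type*} [LinearOrder X] [TopologicalSpace X] [OrderClosedTopology X]
  [MeasurableSpace X] [BorelSpace X]

theorem measurable_measure_Ioi (ρ : Measure X) : Measurable fun x => ρ (Ioi x) :=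
  Antitone.measurable fun _ _ h => measure_mono (Ioi_subset_Ioi h)

theorem measurable_measure_Ici (ρ : Measure X) : Measurable fun x => ρ (Ici x) :=
  Antitone.measurable fun _ _ h => measure_mono (Ici_subset_Ici.2 h)

end TailMeasurability

section LinearOrderMeasure

variable {X : Type*} [LinearOrder X] [TopologicalSpace X] [SecondCountableTopology X]

theorem exists_countable_cofinal_subset [ClosedIicTopology X] (s : Set X) :
    ∃ t ⊆ s, t.Countable ∧ ∀ x ∈ s, ∃ y ∈ t, x ≤ y := by
  by_cases hmax : ∃ m ∈ s, ∀ x ∈ s, x ≤ m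
  · obtain ⟨m, hm, hle⟩ := hmax
    exact ⟨{m}, singleton_subset_iff.2 hm, countable_singleton m, fun x hx => ⟨m, rfl, hle x hx⟩⟩
  · push Not at hmax
    obtain ⟨D, hD, hdense⟩ := TopologicalSpace.exists_countable_dense s
    refine ⟨(↑) '' D, Subtype.coe_image_subset s D, hD.image _, fun x hx => ?_⟩
    obtain ⟨z, hz, hxz⟩ := hmax x hx
    obtain ⟨d, hdD, hxd⟩ := hdense.exists_mem_open
      (isOpen_Ioi.preimage continuous_subtype_val)
      (⟨⟨z, hz⟩, hxz⟩ : ((↑) ⁻¹' Ioi x : Set s).Nonempty)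
    exact ⟨d, mem_image_of_mem _ hdD, (mem_Ioi.1 hxd).le⟩

variable [MeasurableSpace X]

theorem measure_eq_biSup_measure_inter_Iic [ClosedIicTopology X] (μ : Measure X) (s : Set X) :
    μ s = ⨆ x ∈ s, μ (s ∩ Iic x) := by
  refine le_antisymm ?_ (iSup₂_le fun x _ => measure_mono inter_subset_left)
  obtain ⟨t, hts, htc, hcof⟩ := exists_countable_cofinal_subset s
  have hmono : Monotone fun x => s ∩ Iic x :=
    fun a b hab => inter_subset_inter_right s (Iic_subset_Iic.2 hab)
  calc μ s ≤ μ (⋃ x ∈ t, s ∩ Iic x) := by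
        refine measure_mono fun x hx => ?_
        obtain ⟨y, hy, hxy⟩ := hcof x hx
        exact mem_biUnion hy ⟨hx, hxy⟩
    _ = ⨆ x ∈ t, μ (s ∩ Iic x) := measure_biUnion_eq_iSup htc fun a ha b hb =>
          (le_total a b).elim (fun h => ⟨b, hb, hmono h, subset_rfl⟩)
            fun h => ⟨a, ha, subset_rfl, hmono h⟩
    _ ≤ ⨆ x ∈ s, μ (s ∩ Iic x) := biSup_mono hts

theorem measure_eq_biSup_measure_inter_Ici [ClosedIciTopology X] (μ : Measure X) (s : Set X) :
    μ s = ⨆ x ∈ s, μ (s ∩ Ici x) :=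
  measure_eq_biSup_measure_inter_Iic (X := Xᵒᵈ) μ s

theorem measure_setOf_measure_Ici_le [ClosedIciTopology X] (ρ : Measure X) (a : ℝ≥0∞) :
    ρ {t | ρ (Ici t) ≤ a} ≤ a := by
  rw [measure_eq_biSup_measure_inter_Ici]
  exact iSup₂_le fun t ht => (measure_mono inter_subset_right).trans ht

theorem measure_le_add_measure_inter_lt_measure_Ici [ClosedIciTopology X] (ρ : Measure X)
    (s : Set X) (a : ℝ≥0∞) : ρ s ≤ a + ρ (s ∩ {t | a < ρ (Ici t)}) := by
  calc ρ s ≤ ρ ({t | ρ (Ici t) ≤ a} ∪ s ∩ {t | a < ρ (Ici t)}) :=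
        measure_mono fun t ht => (le_or_gt (ρ (Ici t)) a).imp id (And.intro ht)
    _ ≤ a + ρ (s ∩ {t | a < ρ (Ici t)}) :=
        (measure_union_le _ _).trans (by gcongr; exact measure_setOf_measure_Ici_le ρ a)

end LinearOrderMeasure

theorem tsum_rpow_le_rpow_tsum {ι : Type*} (a : ι → ℝ≥0∞) {s : ℝ} (hs : 1 ≤ s) :
    ∑' i, a i ^ s ≤ (∑' i, a i) ^ s := by
  have mul_rpow_sub_one (x : ℝ≥0∞) : x * x ^ (s - 1) = x ^ s := by
    nth_rw 1 [← rpow_one x]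
    rw [← rpow_add_of_nonneg _ _ zero_le_one (sub_nonneg.2 hs), add_sub_cancel]
  calc ∑' i, a i ^ s = ∑' i, a i * a i ^ (s - 1) := by simp only [mul_rpow_sub_one]
    _ ≤ ∑' i, a i * (∑' j, a j) ^ (s - 1) := by
        gcongr with i
        exact ENNReal.le_tsum i
    _ = (∑' i, a i) ^ s := by rw [ENNReal.tsum_mul_right, mul_rpow_sub_one]

section Dyadic

variable {X : Type*}

/-- The `k`-th dyadic layer of `G`, that is `{x | 2 ^ k < G x ≤ 2 ^ (k + 1)}`. The layers partition
the set where `G` is neither `0` nor `∞`; they are used to discretise integrals of powers of `G`. -/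
def dyadicLayer (G : X → ℝ≥0∞) (k : ℤ) : Set X :=
  G ⁻¹' Ioc (2 ^ k) (2 ^ (k + 1))

theorem pairwise_disjoint_dyadicLayer (G : X → ℝ≥0∞) :
    Pairwise (Function.onFun Disjoint (dyadicLayer G)) := by
  have hmono : Monotone fun k : ℤ => (2 : ℝ≥0∞) ^ k :=
    fun _ _ h => ENNReal.zpow_le_of_le one_le_two h
  exact fun i j hij => (hmono.pairwise_disjoint_on_Ioc_succ hij).preimage G

variable [MeasurableSpace X] {μ : Measure X} {G : X → ℝ≥0∞}

theorem measurableSet_dyadicLayer (hG : Measurable G) (k : ℤ) :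
    MeasurableSet (dyadicLayer G k) :=
  hG measurableSet_Ioc

theorem tsum_setLIntegral_dyadicLayer_le (hG : Measurable G) (g : X → ℝ≥0∞) :
    ∑' k, ∫⁻ x in dyadicLayer G k, g x ∂μ ≤ ∫⁻ x, g x ∂μ := by
  rw [← lintegral_iUnion (measurableSet_dyadicLayer hG) (pairwise_disjoint_dyadicLayer G)]
  exact setLIntegral_le_lintegral _ _

theorem lintegral_rpow_le_tsum_dyadicLayer (hG : Measurable G) (hG_top : ∀ᵐ x ∂μ, G x ≠ ∞)
    {q : ℝ} (hq : 0 < q) :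
    ∫⁻ x, G x ^ q ∂μ ≤ ∑' k : ℤ, (2 ^ (k + 1)) ^ q * μ (dyadicLayer G k) := by
  let layerBound (k : ℤ) : X → ℝ≥0∞ := (dyadicLayer G k).indicator fun _ => (2 ^ (k + 1)) ^ q
  have hbound : ∀ᵐ x ∂μ, G x ^ q ≤ ∑' k, layerBound k x := by
    filter_upwards [hG_top] with x hx
    rcases eq_or_ne (G x) 0 with h0 | h0
    · simp only [h0, zero_rpow_of_pos hq, zero_le]
    obtain ⟨k, hk⟩ := exists_mem_Ioc_zpow h0 hx one_lt_two ofNat_ne_top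
    calc G x ^ q ≤ (2 ^ (k + 1)) ^ q := rpow_le_rpow hk.2 hq.le
      _ = layerBound k x := (indicator_of_mem (mem_preimage.2 hk) fun _ => (2 ^ (k + 1)) ^ q).symm
      _ ≤ ∑' k, layerBound k x := ENNReal.le_tsum k
  calc ∫⁻ x, G x ^ q ∂μ ≤ ∫⁻ x, ∑' k, layerBound k x ∂μ := lintegral_mono_ae hbound
    _ = ∑' k, ∫⁻ x, layerBound k x ∂μ := lintegral_tsum fun k =>
        (measurable_const.indicator (measurableSet_dyadicLayer hG k)).aemeasurable
    _ = ∑' k : ℤ, (2 ^ (k + 1)) ^ q * μ (dyadicLayer G k) := by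
        simp only [layerBound, lintegral_indicator_const (measurableSet_dyadicLayer hG _)]

end Dyadic

section Exponents

variable {X : Type*} [MeasurableSpace X] {μ : Measure X} {p p' : ℝ}

theorem lintegral_le_lintegral_mul_rpow_mul_lintegral_rpow_neg {f v : X → ℝ≥0∞}
    (hpp' : p.HolderConjugate p')
    (hf : AEMeasurable f μ) (hv : AEMeasurable v μ) (hv_top : ∀ᵐ x ∂μ, v x ≠ ∞)
    (hV : ∫⁻ x, v x ^ (-p') ∂μ ≠ ∞) :
    ∫⁻ x, f x ∂μ ≤
      (∫⁻ x, (f x * v x) ^ p ∂μ) ^ (1 / p) * (∫⁻ x, v x ^ (-p') ∂μ) ^ (1 / p') := by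
  have hcancel : ∀ᵐ x ∂μ, f x = f x * v x * (v x)⁻¹ := by
    filter_upwards [ae_lt_top' (hv.pow_const _) hV, hv_top] with x hVx hx_top
    have hx0 : v x ≠ 0 := fun h => by
      rw [h, zero_rpow_of_neg (neg_neg_iff_pos.2 hpp'.symm.pos)] at hVx
      exact hVx.ne rfl
    rw [mul_assoc, ENNReal.mul_inv_cancel hx0 hx_top, mul_one]
  calc ∫⁻ x, f x ∂μ = ∫⁻ x, f x * v x * (v x)⁻¹ ∂μ := lintegral_congr_ae hcancel
    _ ≤ (∫⁻ x, (f x * v x) ^ p ∂μ) ^ (1 / p) * (∫⁻ x, (v x)⁻¹ ^ p' ∂μ) ^ (1 / p') :=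
        lintegral_mul_le_Lp_mul_Lq μ hpp' (hf.mul hv) hv.inv
    _ = _ := by simp only [inv_rpow, rpow_neg]

theorem exists_simpleFunc_le_lintegral_lt_top [SigmaFinite μ] {f : X → ℝ≥0∞} {L : ℝ≥0∞}
    (hL : L < ∫⁻ x, f x ∂μ) :
    ∃ g : SimpleFunc X NNReal, (∀ x, g x ≤ f x) ∧ ∫⁻ x, g x ∂μ < ∞ ∧ L < ∫⁻ x, g x ∂μ := by
  obtain ⟨φ, hφf, hLφ⟩ : ∃ φ : SimpleFunc X NNReal,
      (∀ x, φ x ≤ f x) ∧ L < ∫⁻ x, φ x ∂μ := by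
    rw [lintegral_eq_nnreal] at hL
    obtain ⟨φ, hφf, hLφ⟩ := lt_iSup_iff.1 hL |>.imp fun φ => lt_iSup_iff.1
    exact ⟨φ, hφf, hLφ.trans_eq (SimpleFunc.lintegral_eq_lintegral _ _).symm⟩
  obtain ⟨g, hgφ, hg_fin, hLg⟩ := SimpleFunc.exists_lt_lintegral_simpleFunc_of_lt_lintegral hLφ
  exact ⟨g, fun x => (coe_le_coe.2 (hgφ x)).trans (hφf x), hg_fin, hLg⟩

theorem mul_rpow_one_div_conj_le_of_mul_le (hpp' : p.HolderConjugate p') {a c J : ℝ≥0∞}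
    (hJ : J ≠ ∞) (h : a * J ≤ c * J ^ (1 / p)) : a * J ^ (1 / p') ≤ c := by
  rcases eq_or_ne J 0 with hJ0 | hJ0
  · simp only [hJ0, zero_rpow_of_pos hpp'.symm.one_div_pos, mul_zero, zero_le]
  have hsplit : J ^ (1 / p') * J ^ (1 / p) = J := by
    rw [← rpow_add _ _ hJ0 hJ, add_comm, hpp'.one_div_add_one_div, div_one, rpow_one]
  rw [← ENNReal.mul_le_mul_iff_left (rpow_pos (pos_iff_ne_zero.2 hJ0) hJ).ne'
    (rpow_ne_top_of_nonneg hpp'.one_div_nonneg hJ), mul_assoc, hsplit]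
  exact h

theorem mul_rpow_le_self_of_le_rpow_neg (hpp' : p.HolderConjugate p') {a w : ℝ≥0∞}
    (h : a ≤ w ^ (-p')) : (a * w) ^ p ≤ a := by
  have hp1 : 0 < p - 1 := hpp'.sub_one_pos
  calc (a * w) ^ p = a * (a ^ (p - 1) * w ^ p) := by
        rw [mul_rpow_of_nonneg _ _ hpp'.nonneg, ← mul_assoc]
        nth_rw 2 [← rpow_one a]
        rw [← rpow_add_of_nonneg _ _ zero_le_one hp1.le, add_sub_cancel]
    _ ≤ a * ((w ^ p)⁻¹ * w ^ p) := by
        gcongr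
        calc a ^ (p - 1) ≤ (w ^ (-p')) ^ (p - 1) := rpow_le_rpow h hp1.le
          _ = (w ^ p)⁻¹ := by
            rw [← rpow_mul, neg_mul, mul_comm, hpp'.sub_one_mul_conj, rpow_neg]
    _ ≤ a := mul_le_of_le_one_right' (ENNReal.inv_mul_le_one _)

end Exponents

section TailLayers

variable {X : Type*} [LinearOrder X] [MeasurableSpace X] {y : X} {k : ℤ}

theorem Ioi_inter_lt_measure_Ici_subset_dyadicLayer (ρ : Measure X)
    (hy : y ∈ dyadicLayer (fun x => ρ (Ioi x)) k) :
    Ioi y ∩ {t | 2 ^ (k - 1) < ρ (Ici t)} ⊆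
      dyadicLayer (fun x => ρ (Ici x)) k ∪ dyadicLayer (fun x => ρ (Ici x)) (k - 1) := by
  rintro t ⟨hyt, ht⟩
  have ht_le : ρ (Ici t) ≤ 2 ^ (k + 1) := (measure_mono (Ici_subset_Ioi.2 hyt)).trans hy.2
  rcases lt_or_ge (2 ^ k) (ρ (Ici t)) with h | h
  · exact Or.inl ⟨h, ht_le⟩
  · exact Or.inr ⟨ht, by rwa [sub_add_cancel]⟩

theorem two_zpow_sub_one_le_measure_Ioi_inter [TopologicalSpace X] [SecondCountableTopology X]
    [ClosedIciTopology X] (ρ : Measure X) (hy : y ∈ dyadicLayer (fun x => ρ (Ioi x)) k) :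
    2 ^ (k - 1) ≤ ρ (Ioi y ∩ {t | 2 ^ (k - 1) < ρ (Ici t)}) := by
  have htwo : (2 : ℝ≥0∞) ^ k = 2 ^ (k - 1) + 2 ^ (k - 1) := by
    rw [← two_mul, show k = 1 + (k - 1) by ring, ENNReal.zpow_add two_ne_zero ofNat_ne_top,
      zpow_one, add_sub_cancel_left]
  have hfin : (2 : ℝ≥0∞) ^ (k - 1) ≠ ∞ := (zpow_lt_top two_ne_zero ofNat_ne_top _).ne
  refine (ENNReal.add_le_add_iff_left hfin).1 ?_
  rw [← htwo]
  exact hy.1.le.trans (measure_le_add_measure_inter_lt_measure_Ici ρ (Ioi y) (2 ^ (k - 1)))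

end TailLayers

section BradleyConst

variable {X : Type*} [LinearOrder X] [MeasurableSpace X]

/-- The Muckenhoupt–Bradley constant of the pair of measures `μ`, `ν` and the weight `v`. Bradley's
condition on weights `u`, `v` is its finiteness for `μ = u ^ q dx` and `ν = dx`; at a point where
`v = 0` the negative power makes the integrand `∞`. -/
noncomputable def bradleyConst (p' q : ℝ) (μ ν : Measure X) (v : X → ℝ≥0∞) : ℝ≥0∞ :=
  ⨆ r, μ (Iic r) ^ (1 / q) * (∫⁻ x in Ioi r, v x ^ (-p') ∂ν) ^ (1 / p')

variable {p p' q : ℝ} {μ ν : Measure X} {v : X → ℝ≥0∞}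

section Necessity

variable [TopologicalSpace X] [OrderClosedTopology X] [BorelSpace X]

theorem measure_Iic_rpow_mul_setLIntegral_Ioi_le (hq : 0 < q) (f : X → ℝ≥0∞) (r : X) :
    μ (Iic r) ^ (1 / q) * ∫⁻ t in Ioi r, f t ∂ν ≤
      (∫⁻ x, (∫⁻ t in Ioi x, f t ∂ν) ^ q ∂μ) ^ (1 / q) := by
  calc μ (Iic r) ^ (1 / q) * ∫⁻ t in Ioi r, f t ∂ν
      = (∫⁻ _ in Iic r, (∫⁻ t in Ioi r, f t ∂ν) ^ q ∂μ) ^ (1 / q) := by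
        rw [setLIntegral_const, mul_rpow_of_nonneg _ _ (one_div_pos.2 hq).le, ← rpow_mul,
          mul_one_div_cancel hq.ne', rpow_one, mul_comm]
    _ ≤ (∫⁻ x in Iic r, (∫⁻ t in Ioi x, f t ∂ν) ^ q ∂μ) ^ (1 / q) :=
        rpow_le_rpow (setLIntegral_mono' measurableSet_Iic fun _ hx =>
          rpow_le_rpow (lintegral_mono_set (Ioi_subset_Ioi hx)) hq.le) (one_div_pos.2 hq).le
    _ ≤ (∫⁻ x, (∫⁻ t in Ioi x, f t ∂ν) ^ q ∂μ) ^ (1 / q) := by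
        gcongr
        exact Measure.restrict_le_self

theorem measure_Iic_rpow_mul_le_of_le_rpow_neg (hpp' : p.HolderConjugate p') (hq : 0 < q)
    {c : ℝ≥0∞} (hc : ∀ f : X → NNReal, Measurable f →
      (∫⁻ x, (∫⁻ t in Ioi x, f t ∂ν) ^ q ∂μ) ^ (1 / q) ≤
        c * (∫⁻ t, (f t * v t) ^ p ∂ν) ^ (1 / p))
    {r : X} {g : X → NNReal} (hg : Measurable g) (hgv : ∀ x, g x ≤ v x ^ (-p'))
    (hg_fin : ∫⁻ x in Ioi r, g x ∂ν ≠ ∞) :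
    μ (Iic r) ^ (1 / q) * (∫⁻ x in Ioi r, g x ∂ν) ^ (1 / p') ≤ c := by
  let f : X → NNReal := (Ioi r).indicator g
  have hf_le (t : X) : (f t : ℝ≥0∞) ≤ g t := coe_le_coe.2 (indicator_le_self _ _ t)
  have hf_tail : ∫⁻ t in Ioi r, f t ∂ν = ∫⁻ x in Ioi r, g x ∂ν :=
    setLIntegral_congr_fun measurableSet_Ioi fun t ht => congrArg _ (indicator_of_mem ht g)
  have hf_lintegral : ∫⁻ t, f t ∂ν = ∫⁻ x in Ioi r, g x ∂ν := by
    simp only [f, coe_indicator, lintegral_indicator measurableSet_Ioi]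
  refine mul_rpow_one_div_conj_le_of_mul_le hpp' hg_fin ?_
  calc μ (Iic r) ^ (1 / q) * ∫⁻ x in Ioi r, g x ∂ν
      ≤ (∫⁻ x, (∫⁻ t in Ioi x, f t ∂ν) ^ q ∂μ) ^ (1 / q) :=
        hf_tail ▸ measure_Iic_rpow_mul_setLIntegral_Ioi_le hq (fun t => f t) r
    _ ≤ c * (∫⁻ t, (f t * v t) ^ p ∂ν) ^ (1 / p) := hc f (hg.indicator measurableSet_Ioi)
    _ ≤ c * (∫⁻ x in Ioi r, g x ∂ν) ^ (1 / p) := by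
        rw [← hf_lintegral]
        gcongr with t
        · exact hpp'.one_div_nonneg
        · exact mul_rpow_le_self_of_le_rpow_neg hpp' ((hf_le t).trans (hgv t))

theorem bradleyConst_le [SigmaFinite ν] (hpp' : p.HolderConjugate p') (hq : 0 < q)
    {c : ℝ≥0∞} (hc : ∀ f : X → NNReal, Measurable f →
      (∫⁻ x, (∫⁻ t in Ioi x, f t ∂ν) ^ q ∂μ) ^ (1 / q) ≤
        c * (∫⁻ t, (f t * v t) ^ p ∂ν) ^ (1 / p)) :
    bradleyConst p' q μ ν v ≤ c := by
  refine iSup_le fun r => ENNReal.mul_le_of_forall_lt fun a ha b hb => ?_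
  rw [one_div p', lt_rpow_inv_iff hpp'.symm.pos] at hb
  obtain ⟨g, hgv, hg_fin, hbg⟩ := exists_simpleFunc_le_lintegral_lt_top hb
  calc a * b ≤ μ (Iic r) ^ (1 / q) * (∫⁻ x in Ioi r, g x ∂ν) ^ (1 / p') := by
        gcongr
        rw [one_div]
        exact ((lt_rpow_inv_iff hpp'.symm.pos).2 hbg).le
    _ ≤ c := measure_Iic_rpow_mul_le_of_le_rpow_neg hpp' hq hc g.measurable hgv hg_fin.ne

end Necessity

section Sufficiency

theorem setLIntegral_mul_measure_Iic_rpow_le (hpp' : p.HolderConjugate p') {f : X → ℝ≥0∞}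
    (hf : Measurable f) (hv : Measurable v) (hv_top : ∀ᵐ x ∂ν, v x ≠ ∞)
    (hB : bradleyConst p' q μ ν v ≠ ∞) {y : X} {s : Set X} (hs : s ⊆ Ioi y) :
    (∫⁻ t in s, f t ∂ν) * μ (Iic y) ^ (1 / q) ≤
      bradleyConst p' q μ ν v * (∫⁻ t in s, (f t * v t) ^ p ∂ν) ^ (1 / p) := by
  set M := μ (Iic y) ^ (1 / q)
  set V := ∫⁻ t in Ioi y, v t ^ (-p') ∂ν
  have hMV : M * V ^ (1 / p') ≤ bradleyConst p' q μ ν v :=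
    le_iSup (fun r => μ (Iic r) ^ (1 / q) * (∫⁻ x in Ioi r, v x ^ (-p') ∂ν) ^ (1 / p')) y
  rcases eq_or_ne M 0 with hM | hM
  · simp only [hM, mul_zero, zero_le]
  have hV : V ≠ ∞ := fun h => by
    rw [h, top_rpow_of_pos hpp'.symm.one_div_pos, mul_top hM] at hMV
    exact hB (top_le_iff.1 hMV)
  have hVs : ∫⁻ t in s, v t ^ (-p') ∂ν ≤ V := lintegral_mono_set hs
  set R := (∫⁻ t in s, (f t * v t) ^ p ∂ν) ^ (1 / p)
  calc (∫⁻ t in s, f t ∂ν) * M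
      ≤ R * (∫⁻ t in s, v t ^ (-p') ∂ν) ^ (1 / p') * M := by
        gcongr
        exact lintegral_le_lintegral_mul_rpow_mul_lintegral_rpow_neg hpp' hf.aemeasurable
          hv.aemeasurable (ae_restrict_of_ae hv_top) (ne_top_of_le_ne_top hV hVs)
    _ ≤ R * V ^ (1 / p') * M := by
        gcongr
        exact hpp'.symm.one_div_nonneg
    _ = M * V ^ (1 / p') * R := by ring
    _ ≤ bradleyConst p' q μ ν v * R := by gcongr

variable [TopologicalSpace X] [OrderClosedTopology X] [SecondCountableTopology X] [BorelSpace X]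

theorem two_zpow_mul_measure_Iic_rpow_le (hpp' : p.HolderConjugate p')
    {f : X → ℝ≥0∞} (hf : Measurable f) (hv : Measurable v) (hv_top : ∀ᵐ x ∂ν, v x ≠ ∞)
    (hB : bradleyConst p' q μ ν v ≠ ∞) {y : X} {k : ℤ}
    (hy : y ∈ dyadicLayer (fun x => ν.withDensity f (Ioi x)) k) :
    2 ^ (k + 1) * μ (Iic y) ^ (1 / q) ≤
      4 * bradleyConst p' q μ ν v *
        (∫⁻ t in dyadicLayer (fun x => ν.withDensity f (Ici x)) k, (f t * v t) ^ p ∂ν +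
          ∫⁻ t in dyadicLayer (fun x => ν.withDensity f (Ici x)) (k - 1), (f t * v t) ^ p ∂ν)
            ^ (1 / p) := by
  set ρ := ν.withDensity f
  let A := Ioi y ∩ {t | 2 ^ (k - 1) < ρ (Ici t)}
  have hA : MeasurableSet A :=
    measurableSet_Ioi.inter (measurableSet_lt measurable_const (measurable_measure_Ici ρ))
  have hmass : 2 ^ (k - 1) ≤ ∫⁻ t in A, f t ∂ν :=
    (two_zpow_sub_one_le_measure_Ioi_inter ρ hy).trans_eq (withDensity_apply f hA)
  have hquarter : (2 : ℝ≥0∞) ^ (k + 1) = 4 * 2 ^ (k - 1) := by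
    rw [show k + 1 = 2 + (k - 1) by ring, ENNReal.zpow_add two_ne_zero ofNat_ne_top]
    norm_num
  rw [hquarter, mul_assoc, mul_assoc]
  gcongr 4 * ?_
  calc 2 ^ (k - 1) * μ (Iic y) ^ (1 / q)
      ≤ (∫⁻ t in A, f t ∂ν) * μ (Iic y) ^ (1 / q) := by gcongr
    _ ≤ bradleyConst p' q μ ν v * (∫⁻ t in A, (f t * v t) ^ p ∂ν) ^ (1 / p) :=
        setLIntegral_mul_measure_Iic_rpow_le hpp' hf hv hv_top hB inter_subset_left
    _ ≤ _ := by
        gcongr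
        · exact hpp'.one_div_nonneg
        · exact (lintegral_mono_set (Ioi_inter_lt_measure_Ici_subset_dyadicLayer ρ hy)).trans
            (lintegral_union_le _ _ _)

theorem rpow_mul_measure_dyadicLayer_le (hpp' : p.HolderConjugate p') (hq : 0 < q)
    {f : X → ℝ≥0∞} (hf : Measurable f) (hv : Measurable v) (hv_top : ∀ᵐ x ∂ν, v x ≠ ∞)
    (hB : bradleyConst p' q μ ν v ≠ ∞) (k : ℤ) :
    (2 ^ (k + 1)) ^ q * μ (dyadicLayer (fun x => ν.withDensity f (Ioi x)) k) ≤
      (4 * bradleyConst p' q μ ν v) ^ q *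
        (∫⁻ t in dyadicLayer (fun x => ν.withDensity f (Ici x)) k, (f t * v t) ^ p ∂ν +
          ∫⁻ t in dyadicLayer (fun x => ν.withDensity f (Ici x)) (k - 1), (f t * v t) ^ p ∂ν)
            ^ (q / p) := by
  rw [measure_eq_biSup_measure_inter_Iic μ]
  simp only [ENNReal.mul_iSup]
  refine iSup₂_le fun y hy => ?_
  calc (2 ^ (k + 1)) ^ q * μ (dyadicLayer (fun x => ν.withDensity f (Ioi x)) k ∩ Iic y)
      ≤ (2 ^ (k + 1)) ^ q * μ (Iic y) := by gcongr; exact inter_subset_right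
    _ = (2 ^ (k + 1) * μ (Iic y) ^ (1 / q)) ^ q := by
        rw [mul_rpow_of_nonneg _ _ hq.le, ← rpow_mul, one_div_mul_cancel hq.ne', rpow_one]
    _ ≤ _ := rpow_le_rpow (two_zpow_mul_measure_Iic_rpow_le hpp' hf hv hv_top hB hy) hq.le
    _ = _ := by rw [mul_rpow_of_nonneg _ _ hq.le, ← rpow_mul, one_div_mul_eq_div]

theorem ae_withDensity_Ioi_ne_top (hpp' : p.HolderConjugate p') (hq : 0 < q)
    {f : X → ℝ≥0∞} (hf : Measurable f) (hv : Measurable v) (hv_top : ∀ᵐ x ∂ν, v x ≠ ∞)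
    (hB : bradleyConst p' q μ ν v ≠ ∞)
    (hfin : bradleyConst p' q μ ν v * (∫⁻ t, (f t * v t) ^ p ∂ν) ^ (1 / p) ≠ ∞) :
    ∀ᵐ x ∂μ, ν.withDensity f (Ioi x) ≠ ∞ := by
  rw [ae_iff, measure_eq_biSup_measure_inter_Iic μ]
  refine le_antisymm (iSup₂_le fun y hy => (measure_mono inter_subset_right).trans ?_) zero_le
  have hy_top : ∫⁻ t in Ioi y, f t ∂ν = ∞ := by
    rw [← withDensity_apply f measurableSet_Ioi]
    exact not_not.1 hy
  by_contra hμ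
  have hpos : μ (Iic y) ^ (1 / q) ≠ 0 :=
    (rpow_pos_of_nonneg (not_le.1 hμ) (one_div_pos.2 hq).le).ne'
  have hle := setLIntegral_mul_measure_Iic_rpow_le (μ := μ) (q := q) hpp' hf hv hv_top hB
    (subset_refl (Ioi y))
  rw [hy_top, top_mul hpos] at hle
  refine hfin (top_le_iff.1 (hle.trans ?_))
  gcongr
  · exact hpp'.one_div_nonneg
  · exact Measure.restrict_le_self

theorem lintegral_withDensity_Ioi_rpow_le (hpp' : p.HolderConjugate p') (hpq : p ≤ q)
    {f : X → ℝ≥0∞} (hf : Measurable f) (hv : Measurable v) (hv_top : ∀ᵐ x ∂ν, v x ≠ ∞)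
    (hB : bradleyConst p' q μ ν v ≠ ∞)
    (hfin : bradleyConst p' q μ ν v * (∫⁻ t, (f t * v t) ^ p ∂ν) ^ (1 / p) ≠ ∞) :
    ∫⁻ x, ν.withDensity f (Ioi x) ^ q ∂μ ≤
      (4 * bradleyConst p' q μ ν v) ^ q * (2 * ∫⁻ t, (f t * v t) ^ p ∂ν) ^ (q / p) := by
  have hq : 0 < q := hpp'.pos.trans_le hpq
  have hqp : 1 ≤ q / p := (one_le_div hpp'.pos).2 hpq
  set ρ := ν.withDensity f
  set B := bradleyConst p' q μ ν v
  let I (k : ℤ) : ℝ≥0∞ := ∫⁻ t in dyadicLayer (fun x => ρ (Ici x)) k, (f t * v t) ^ p ∂ν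
  have hsum : ∑' k, I k ≤ ∫⁻ t, (f t * v t) ^ p ∂ν :=
    tsum_setLIntegral_dyadicLayer_le (measurable_measure_Ici ρ) _
  have hsum_shift : ∑' k, I (k - 1) = ∑' k, I k := (Equiv.subRight (1 : ℤ)).tsum_eq I
  calc ∫⁻ x, ρ (Ioi x) ^ q ∂μ
      ≤ ∑' k : ℤ, (2 ^ (k + 1)) ^ q * μ (dyadicLayer (fun x => ρ (Ioi x)) k) :=
        lintegral_rpow_le_tsum_dyadicLayer (measurable_measure_Ioi ρ)
          (ae_withDensity_Ioi_ne_top hpp' hq hf hv hv_top hB hfin) hq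
    _ ≤ ∑' k, (4 * B) ^ q * (I k + I (k - 1)) ^ (q / p) :=
        ENNReal.tsum_le_tsum (rpow_mul_measure_dyadicLayer_le hpp' hq hf hv hv_top hB)
    _ ≤ (4 * B) ^ q * (∑' k, (I k + I (k - 1))) ^ (q / p) := by
        rw [ENNReal.tsum_mul_left]
        gcongr
        exact tsum_rpow_le_rpow_tsum _ hqp
    _ ≤ (4 * B) ^ q * (2 * ∫⁻ t, (f t * v t) ^ p ∂ν) ^ (q / p) := by
        rw [ENNReal.tsum_add, hsum_shift, ← two_mul]
        gcongr

theorem lintegral_tail_rpow_le (hpp' : p.HolderConjugate p') (hpq : p ≤ q)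
    {f : X → ℝ≥0∞} (hf : Measurable f) (hv : Measurable v) (hv_top : ∀ᵐ x ∂ν, v x ≠ ∞)
    (hB : bradleyConst p' q μ ν v ≠ ∞) :
    (∫⁻ x, (∫⁻ t in Ioi x, f t ∂ν) ^ q ∂μ) ^ (1 / q) ≤
      8 * bradleyConst p' q μ ν v * (∫⁻ t, (f t * v t) ^ p ∂ν) ^ (1 / p) := by
  have hq : 0 < q := hpp'.pos.trans_le hpq
  set B := bradleyConst p' q μ ν v
  set R := ∫⁻ t, (f t * v t) ^ p ∂ν
  rcases eq_or_ne (B * R ^ (1 / p)) ∞ with hBR | hBR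
  · rw [mul_assoc, hBR, mul_top (by norm_num)]
    exact le_top
  have htwo : (2 : ℝ≥0∞) ^ (1 / p) ≤ 2 :=
    (rpow_le_rpow_of_exponent_le one_le_two
      ((div_le_one hpp'.pos).2 hpp'.lt.le)).trans_eq (rpow_one 2)
  calc (∫⁻ x, (∫⁻ t in Ioi x, f t ∂ν) ^ q ∂μ) ^ (1 / q)
      = (∫⁻ x, ν.withDensity f (Ioi x) ^ q ∂μ) ^ (1 / q) := by
        simp only [withDensity_apply f measurableSet_Ioi]
    _ ≤ ((4 * B) ^ q * (2 * R) ^ (q / p)) ^ (1 / q) := by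
        gcongr
        exact lintegral_withDensity_Ioi_rpow_le hpp' hpq hf hv hv_top hB hBR
    _ = 4 * B * (2 ^ (1 / p) * R ^ (1 / p)) := by
        rw [mul_rpow_of_nonneg _ _ (one_div_pos.2 hq).le, ← rpow_mul, ← rpow_mul,
          mul_one_div_cancel hq.ne', rpow_one, div_mul_div_cancel₀' hq.ne',
          mul_rpow_of_nonneg _ _ hpp'.one_div_nonneg]
    _ ≤ 4 * B * (2 * R ^ (1 / p)) := by gcongr
    _ = 8 * B * R ^ (1 / p) := by ring

end Sufficiency

end BradleyConst

section UpperSet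

variable {X : Type*} [LinearOrder X] [MeasurableSpace X] [TopologicalSpace X]
  [OrderClosedTopology X] [BorelSpace X]
  {p p' q : ℝ} {μ ν : Measure X} {u v : X → ℝ≥0∞} {s : Set X}

theorem bradleyConst_restrict (hs : IsUpperSet s) (hq : 0 < q) :
    bradleyConst p' q ((μ.restrict s).withDensity fun x => u x ^ q) (ν.restrict s) v =
      ⨆ r ∈ s, (∫⁻ x in s ∩ Iic r, u x ^ q ∂μ) ^ (1 / q) *
        (∫⁻ x in Ioi r, v x ^ (-p') ∂ν) ^ (1 / p') := by
  refine iSup_congr fun r => ?_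
  rw [withDensity_apply _ measurableSet_Iic, Measure.restrict_restrict measurableSet_Iic,
    Measure.restrict_restrict measurableSet_Ioi, inter_comm]
  by_cases hr : r ∈ s
  · rw [inter_eq_left.2 fun x hx => hs (mem_Ioi.1 hx).le hr, iSup_pos hr]
  · have hempty : s ∩ Iic r = ∅ :=
      eq_empty_of_forall_notMem fun x hx => hr (hs hx.2 hx.1)
    simp only [hempty, Measure.restrict_empty, lintegral_zero_measure,
      zero_rpow_of_pos (one_div_pos.2 hq), zero_mul, hr, iSup_false, bot_eq_zero]

theorem lintegral_tail_rpow_restrict (hs : IsUpperSet s) (hq : 0 ≤ q) (hu : Measurable u)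
    (f : X → ℝ≥0∞) :
    ∫⁻ x, (∫⁻ t in Ioi x, f t ∂ν.restrict s) ^ q ∂(μ.restrict s).withDensity (fun x => u x ^ q) =
      ∫⁻ x in s, (u x * ∫⁻ t in Ioi x, f t ∂ν) ^ q ∂μ := by
  have hF : Measurable fun x => ∫⁻ t in Ioi x, f t ∂ν.restrict s :=
    Antitone.measurable fun _ _ h => lintegral_mono_set (Ioi_subset_Ioi h)
  rw [lintegral_withDensity_eq_lintegral_mul _ (hu.pow_const q) (hF.pow_const q)]
  refine setLIntegral_congr_fun hs.ordConnected.measurableSet fun x hx => ?_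
  have hIoi : Ioi x ∩ s = Ioi x := inter_eq_left.2 fun t ht => hs (mem_Ioi.1 ht).le hx
  simp only [Pi.mul_apply, Measure.restrict_restrict measurableSet_Ioi, hIoi,
    mul_rpow_of_nonneg _ _ hq]

theorem stmt_7_general [SecondCountableTopology X] [SigmaFinite ν]
    (hpp' : p.HolderConjugate p') (hpq : p ≤ q) (hu : Measurable u) (hv : Measurable v)
    (hv_top : ∀ᵐ x ∂ν.restrict s, v x ≠ ∞) (hs : IsUpperSet s) :
    (∃ c : ℝ, 0 < c ∧ ∀ f : X → ℝ, Measurable f → (∀ x ∈ s, 0 ≤ f x) →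
      (∫⁻ x in s, (u x * ∫⁻ t in Ioi x, ENNReal.ofReal (f t) ∂ν) ^ q ∂μ) ^ (1 / q) ≤
        ENNReal.ofReal c * (∫⁻ x in s, (ENNReal.ofReal (f x) * v x) ^ p ∂ν) ^ (1 / p)) ↔
    (⨆ r ∈ s, (∫⁻ x in s ∩ Iic r, u x ^ q ∂μ) ^ (1 / q) *
      (∫⁻ x in Ioi r, v x ^ (-p') ∂ν) ^ (1 / p')) < ∞ := by
  have hq : 0 < q := hpp'.pos.trans_le hpq
  rw [← bradleyConst_restrict hs hq]
  simp only [← lintegral_tail_rpow_restrict hs hq.le hu]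
  set B := bradleyConst p' q ((μ.restrict s).withDensity fun x => u x ^ q) (ν.restrict s) v
  constructor
  · rintro ⟨c, -, hc⟩
    refine (bradleyConst_le hpp' hq fun f hf => ?_).trans_lt (ofReal_lt_top (r := c))
    simpa only [ofReal_coe_nnreal] using hc (fun x => f x) hf.coe_nnreal_real fun x _ => (f x).2
  · intro hB
    have hB8 : 8 * B ≤ ENNReal.ofReal ((8 * B).toReal + 1) :=
      (le_ofReal_iff_toReal_le (mul_ne_top ofNat_ne_top hB.ne) (by positivity)).2 (by simp)
    refine ⟨(8 * B).toReal + 1, by positivity, fun f hf _ => ?_⟩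
    exact (lintegral_tail_rpow_le hpp' hpq hf.ennreal_ofReal hv hv_top hB.ne).trans (by gcongr)

end UpperSet

/-- Bradley's dual weighted Hardy inequality with mixed norms: for `1 < p ≤ q < ∞`
the inequality
`(∫₀^∞ [u(x) ∫_x^∞ f]^q)^{1/q} ≤ c (∫₀^∞ [f v]^p)^{1/p}`
holds for all nonnegative measurable `f` iff
`sup_{r>0} (∫₀^r u^q)^{1/q} (∫_r^∞ v^{-p'})^{1/p'} < ∞`. -/
theorem stmt_7 (p q : ℝ) (hp : 1 < p) (hpq : p ≤ q)
    (u v : ℝ → ℝ) (hu : Measurable u) (hv : Measurable v)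
    (hu0 : ∀ x ∈ Ioi (0 : ℝ), 0 ≤ u x) (hv0 : ∀ x ∈ Ioi (0 : ℝ), 0 ≤ v x) :
    (∃ c : ℝ, 0 < c ∧ ∀ f : ℝ → ℝ, Measurable f → (∀ x ∈ Ioi (0 : ℝ), 0 ≤ f x) →
      (∫⁻ x in Ioi (0 : ℝ),
          (ENNReal.ofReal (u x) * ∫⁻ t in Ioi x, ENNReal.ofReal (f t)) ^ q) ^ (1 / q) ≤
        ENNReal.ofReal c *
          (∫⁻ x in Ioi (0 : ℝ), (ENNReal.ofReal (f x) * ENNReal.ofReal (v x)) ^ p) ^ (1 / p)) ↔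
    (⨆ r ∈ Ioi (0 : ℝ),
      (∫⁻ x in Ioc (0 : ℝ) r, ENNReal.ofReal (u x) ^ q) ^ (1 / q) *
        (∫⁻ x in Ioi r, ENNReal.ofReal (v x) ^ (-(p / (p - 1)))) ^ ((p - 1) / p)) < ∞ := by
  simpa only [Real.conjExponent, one_div_div, Ioi_inter_Iic] using
    stmt_7_general (.conjExponent hp) hpq hu.ennreal_ofReal hv.ennreal_ofReal
      (.of_forall fun _ => ofReal_ne_top) (isUpperSet_Ioi 0)
end

section
/- Let n ≥ 2, 1 < p < n, and 1 ≤ q ≤ ∞. Then there exists a constant C > 0 such that for every smooth compactly supported f : ℝⁿ → ℝ, ‖ |x|^{-1} f ‖_{p,q} ≤ C ‖ |∇f| ‖_{p,q}, where |x|^{-1} f denotes the function x ↦ f(x)/|x|. -/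
open MeasureTheory Set ENNReal

/-- The distribution function `μ_f(λ) = μ{x : |f x| > λ}` of a function. -/
noncomputable def distribFn {α : Type*} [MeasurableSpace α] (μ : Measure α)
    (f : α → ℝ) (l : ℝ≥0∞) : ℝ≥0∞ :=
  μ {x | l < ENNReal.ofReal |f x|}

/-- The decreasing rearrangement `f*(t) = inf {λ > 0 : μ_f(λ) ≤ t}`. -/
noncomputable def rearr {α : Type*} [MeasurableSpace α] (μ : Measure α)
    (f : α → ℝ) (t : ℝ) : ℝ≥0∞ :=
  sInf {l : ℝ≥0∞ | 0 < l ∧ distribFn μ f l ≤ ENNReal.ofReal t}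

/-- The Lorentz `L^{p,q}` (quasi)norm
`‖f‖_{p,q} = (∫₀^∞ (t^{1/p} f*(t))^q dt/t)^{1/q}` for `q < ∞`, and
`‖f‖_{p,∞} = sup_{t>0} t^{1/p} f*(t)`. -/
noncomputable def lorentz {α : Type*} [MeasurableSpace α] (μ : Measure α)
    (p q : ℝ≥0∞) (f : α → ℝ) : ℝ≥0∞ :=
  if q = ∞ then ⨆ t ∈ Ioi (0 : ℝ), ENNReal.ofReal t ^ p.toReal⁻¹ * rearr μ f t
  else (∫⁻ t in Ioi (0 : ℝ),
      (ENNReal.ofReal t ^ p.toReal⁻¹ * rearr μ f t) ^ q.toReal / ENNReal.ofReal t) ^ q.toReal⁻¹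

/-! Integrating the derivative along rays gives `|f x| / ‖x‖ ≤ ∫₁^∞ ‖f'(s x)‖ ds`, so the Hardy
quotient `h` is dominated by a superposition of dilates of `g = ‖f'‖`. Averaging over superlevel
sets of `h` turns this into `h*(t) ≤ ∫₁^∞ g**(sᵈ t) ds = ∫₁^∞ ∫₀¹ g*(sᵈ w t) dw ds`. Since `dt/t` is
invariant under dilations, each `g*(sᵈ w ·)` contributes `(sᵈ w)^{-1/p} ‖g‖_{p,q}` to the Lorentz
norm, and `∫₁^∞ ∫₀¹ (sᵈ w)^{-1/p} dw ds = p / (d - p) * (p / (p - 1))` is finite exactly when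
`1 < p < d`. -/

section Rearrangement

variable {α : Type*} [MeasurableSpace α] {μ : Measure α} {f : α → ℝ} {t : ℝ} {l : ℝ≥0∞}

lemma distribFn_antitone (μ : Measure α) (f : α → ℝ) : Antitone (distribFn μ f) :=
  fun _ _ hkl => measure_mono fun _ hx => hkl.trans_lt hx

lemma rearr_antitone (μ : Measure α) (f : α → ℝ) : Antitone (rearr μ f) :=
  fun _ _ hst => sInf_le_sInf fun _ hl => ⟨hl.1, hl.2.trans (ENNReal.ofReal_le_ofReal hst)⟩

@[fun_prop]
lemma measurable_rearr (μ : Measure α) (f : α → ℝ) : Measurable (rearr μ f) :=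
  (rearr_antitone μ f).measurable

lemma le_rearr_of_lt_distribFn (h : ENNReal.ofReal t < distribFn μ f l) : l ≤ rearr μ f t := by
  refine le_sInf fun k hk => ?_
  by_contra! hkl
  exact (h.trans_le ((distribFn_antitone μ f hkl.le).trans hk.2)).false

lemma lt_distribFn_of_lt_rearr (hl : 0 < l) (h : l < rearr μ f t) :
    ENNReal.ofReal t < distribFn μ f l := by
  by_contra! hD
  exact (h.trans_le (sInf_le ⟨hl, hD⟩)).false

/-- The maximal rearrangement `f**(t) = t⁻¹ ∫₀ᵗ f*`, with the integral rescaled to an average over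
`(0, 1)` so that no division is needed. It controls the averages of `|f|` over sets of measure
`t`. -/
noncomputable def maxRearr (μ : Measure α) (f : α → ℝ) (t : ℝ) : ℝ≥0∞ :=
  ∫⁻ w in Ioo (0 : ℝ) 1, rearr μ f (w * t)

lemma maxRearr_antitone (μ : Measure α) (f : α → ℝ) : Antitone (maxRearr μ f) :=
  fun _ _ hst => setLIntegral_mono' measurableSet_Ioo fun _ hw =>
    rearr_antitone μ f (mul_le_mul_of_nonneg_left hst hw.1.le)

lemma lintegral_measure_ofReal_le_le {K : α → ℝ≥0∞} (hK : Measurable K) :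
    ∫⁻ l in Ioi (0 : ℝ), μ {x | ENNReal.ofReal l ≤ K x} ≤ ∫⁻ x, K x ∂μ := by
  rcases eq_or_ne (∫⁻ x, K x ∂μ) ⊤ with htop | hfin
  · exact htop ▸ le_top
  have hK_fin : ∀ᵐ x ∂μ, K x < ⊤ := ae_lt_top hK hfin
  refine le_of_eq ?_
  calc ∫⁻ l in Ioi (0 : ℝ), μ {x | ENNReal.ofReal l ≤ K x}
      = ∫⁻ l in Ioi (0 : ℝ), μ {x | l ≤ (K x).toReal} := by
        refine lintegral_congr fun l => measure_congr ?_
        filter_upwards [hK_fin] with x hx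
        exact propext (ENNReal.ofReal_le_iff_le_toReal hx.ne)
    _ = ∫⁻ x, ENNReal.ofReal (K x).toReal ∂μ :=
        (lintegral_eq_lintegral_meas_le μ (ae_of_all _ fun _ => ENNReal.toReal_nonneg)
          hK.ennreal_toReal.aemeasurable).symm
    _ = ∫⁻ x, K x ∂μ := lintegral_congr_ae (hK_fin.mono fun _ hx => ENNReal.ofReal_toReal hx.ne)

lemma measure_restrict_superlevel_le (f : α → ℝ) {S : Set α} (hS : μ S ≠ ⊤)
    {l : ℝ} (hl : 0 ≤ l) :
    μ.restrict S {x | l < |f x|} ≤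
      μ S * volume.restrict (Ioo 0 1) {w | ENNReal.ofReal l ≤ rearr μ f (w * μ.real S)} := by
  rcases eq_or_ne (μ S) 0 with hS0 | hS0
  · simp [Measure.restrict_eq_zero.2 hS0]
  set r := μ.restrict S {x | l < |f x|}
  have hrS : r ≤ μ S := (measure_mono (subset_univ _)).trans_eq (Measure.restrict_apply_univ S)
  have hrD : r ≤ distribFn μ f (ENNReal.ofReal l) :=
    (Measure.restrict_apply_le _ _).trans
      (measure_mono fun x hx => (ENNReal.ofReal_lt_ofReal_iff_of_nonneg hl).2 hx)
  have hr_div : r / μ S ≠ ⊤ := ENNReal.div_ne_top (ne_top_of_le_ne_top hS hrS) hS0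
  have hsub : Ioo 0 (r / μ S).toReal ⊆
      {w | ENNReal.ofReal l ≤ rearr μ f (w * μ.real S)} ∩ Ioo 0 1 := by
    intro w ⟨hw0, hw⟩
    have hw_lt : ENNReal.ofReal w < r / μ S := (ENNReal.ofReal_lt_iff_lt_toReal hw0.le hr_div).2 hw
    have hwS : ENNReal.ofReal (w * μ.real S) < r := by
      rw [ENNReal.ofReal_mul hw0.le, ofReal_measureReal hS]
      exact ENNReal.mul_lt_of_lt_div hw_lt
    have hw1 : ENNReal.ofReal w < 1 := hw_lt.trans_le (ENNReal.div_le_of_le_mul (by rwa [one_mul]))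
    exact ⟨le_rearr_of_lt_distribFn (hwS.trans_le hrD), hw0, ENNReal.ofReal_lt_one.1 hw1⟩
  calc r = μ S * volume (Ioo 0 (r / μ S).toReal) := by
        rw [Real.volume_Ioo, sub_zero, ENNReal.ofReal_toReal hr_div,
          ENNReal.mul_div_cancel hS0 hS]
    _ ≤ _ := by
        rw [Measure.restrict_apply' measurableSet_Ioo]
        gcongr

lemma setLIntegral_le_measure_mul_maxRearr (hf : Measurable f) {S : Set α} (hS : μ S ≠ ⊤) :
    ∫⁻ x in S, ENNReal.ofReal |f x| ∂μ ≤ μ S * maxRearr μ f (μ.real S) := by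
  calc ∫⁻ x in S, ENNReal.ofReal |f x| ∂μ
      = ∫⁻ l in Ioi (0 : ℝ), μ.restrict S {x | l < |f x|} :=
        lintegral_eq_lintegral_meas_lt _ (ae_of_all _ fun _ => abs_nonneg _)
          hf.abs.aemeasurable
    _ ≤ ∫⁻ l in Ioi (0 : ℝ), μ S *
          volume.restrict (Ioo 0 1) {w | ENNReal.ofReal l ≤ rearr μ f (w * μ.real S)} :=
        setLIntegral_mono' measurableSet_Ioi fun _ hl =>
          measure_restrict_superlevel_le f hS (le_of_lt hl)
    _ = μ S * ∫⁻ l in Ioi (0 : ℝ),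
          volume.restrict (Ioo 0 1) {w | ENNReal.ofReal l ≤ rearr μ f (w * μ.real S)} :=
        lintegral_const_mul' _ _ hS
    _ ≤ μ S * maxRearr μ f (μ.real S) :=
        mul_le_mul_right (lintegral_measure_ofReal_le_le (by fun_prop)) _

lemma rearr_le_of_setLIntegral_le [SigmaFinite μ] (hf : Measurable f) {b : ℝ≥0∞}
    (h : ∀ S, ENNReal.ofReal t < μ S → μ S ≠ ⊤ →
      ∫⁻ x in S, ENNReal.ofReal |f x| ∂μ ≤ μ S * b) :
    rearr μ f t ≤ b := by
  refine le_of_forall_lt_imp_le_of_dense fun l hl => ?_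
  rcases eq_zero_or_pos l with rfl | hl0
  · exact zero_le
  have hlevel : MeasurableSet {x | l < ENNReal.ofReal |f x|} :=
    measurableSet_lt measurable_const (by fun_prop)
  obtain ⟨S, hSm, hSl, htS, hS⟩ :=
    Measure.exists_subset_measure_lt_top hlevel (lt_distribFn_of_lt_rearr hl0 hl)
  refine (ENNReal.mul_le_mul_iff_right (pos_of_gt htS).ne' hS.ne).1 ?_
  calc μ S * l = ∫⁻ _ in S, l ∂μ := by rw [setLIntegral_const, mul_comm]
    _ ≤ ∫⁻ x in S, ENNReal.ofReal |f x| ∂μ := setLIntegral_mono' hSm fun x hx => (hSl hx).le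
    _ ≤ μ S * b := h S htS hS.ne

end Rearrangement

section Dilation

open Module

variable {E : Type*} [NormedAddCommGroup E] [NormedSpace ℝ E] [FiniteDimensional ℝ E]
  [MeasurableSpace E] [BorelSpace E] {μ : Measure E} [μ.IsAddHaarMeasure] {g h : E → ℝ}

lemma distribFn_comp_smul (μ : Measure E) [μ.IsAddHaarMeasure] (g : E → ℝ) {s : ℝ} (hs : 0 < s)
    (l : ℝ≥0∞) :
    distribFn μ (fun x => g (s • x)) l =
      (ENNReal.ofReal (s ^ finrank ℝ E))⁻¹ * distribFn μ g l := by
  have hsd : 0 < s ^ finrank ℝ E := pow_pos hs _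
  rw [← ENNReal.ofReal_inv_of_pos hsd, ← abs_of_pos (inv_pos.2 hsd)]
  exact Measure.addHaar_preimage_smul μ hs.ne' {x | l < ENNReal.ofReal |g x|}

lemma rearr_comp_smul (μ : Measure E) [μ.IsAddHaarMeasure] (g : E → ℝ) {s : ℝ} (hs : 0 < s)
    (t : ℝ) :
    rearr μ (fun x => g (s • x)) t = rearr μ g (s ^ finrank ℝ E * t) := by
  have hsd : 0 < s ^ finrank ℝ E := pow_pos hs _
  simp only [rearr, distribFn_comp_smul μ g hs, ENNReal.ofReal_mul hsd.le,
    ENNReal.inv_mul_le_iff (ENNReal.ofReal_pos.2 hsd).ne' ENNReal.ofReal_ne_top]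

lemma maxRearr_comp_smul (μ : Measure E) [μ.IsAddHaarMeasure] (g : E → ℝ) {s : ℝ} (hs : 0 < s)
    (t : ℝ) :
    maxRearr μ (fun x => g (s • x)) t = maxRearr μ g (s ^ finrank ℝ E * t) := by
  simp only [maxRearr, rearr_comp_smul μ g hs, mul_left_comm]

lemma rearr_le_lintegral_maxRearr {ν : Measure ℝ} [SFinite ν] (hν : ∀ᵐ s ∂ν, 0 < s)
    (hg : Measurable g) (hh : Measurable h)
    (hhg : ∀ x, ENNReal.ofReal |h x| ≤ ∫⁻ s, ENNReal.ofReal |g (s • x)| ∂ν) (t : ℝ) :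
    rearr μ h t ≤ ∫⁻ s, maxRearr μ g (s ^ finrank ℝ E * t) ∂ν := by
  refine rearr_le_of_setLIntegral_le hh fun S htS hS => ?_
  have htS_real : t ≤ μ.real S := (ENNReal.ofReal_le_iff_le_toReal hS).1 htS.le
  calc ∫⁻ x in S, ENNReal.ofReal |h x| ∂μ
      ≤ ∫⁻ x in S, ∫⁻ s, ENNReal.ofReal |g (s • x)| ∂ν ∂μ := lintegral_mono hhg
    _ = ∫⁻ s, ∫⁻ x in S, ENNReal.ofReal |g (s • x)| ∂μ ∂ν :=
        lintegral_lintegral_swap (by unfold Function.uncurry; fun_prop)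
    _ ≤ ∫⁻ s, μ S * maxRearr μ g (s ^ finrank ℝ E * t) ∂ν := by
        refine lintegral_mono_ae (hν.mono fun s hs => ?_)
        rw [← maxRearr_comp_smul μ g hs]
        exact (setLIntegral_le_measure_mul_maxRearr (by fun_prop) hS).trans
          (mul_le_mul_right (maxRearr_antitone μ _ htS_real) _)
    _ = μ S * ∫⁻ s, maxRearr μ g (s ^ finrank ℝ E * t) ∂ν := lintegral_const_mul' _ _ hS

end Dilation

section MulConvolution

lemma lintegral_Ioi_comp_mul_div {a : ℝ} (ha : 0 < a) (Φ : ℝ → ℝ≥0∞) :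
    ∫⁻ t in Ioi (0 : ℝ), Φ (a * t) / ENNReal.ofReal t =
      ∫⁻ t in Ioi (0 : ℝ), Φ t / ENNReal.ofReal t := by
  have ha0 : ENNReal.ofReal a ≠ 0 := (ENNReal.ofReal_pos.2 ha).ne'
  have hemb : MeasurableEmbedding (a * ·) := measurableEmbedding_mulLeft₀ ha.ne'
  conv_rhs => rw [← Real.smul_map_volume_mul_left ha.ne', Measure.restrict_smul,
    lintegral_smul_measure, hemb.restrict_map, hemb.lintegral_map,
    preimage_const_mul_Ioi₀ _ ha, zero_div, abs_of_pos ha, smul_eq_mul,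
    ← lintegral_const_mul' _ _ ENNReal.ofReal_ne_top]
  refine lintegral_congr fun t => ?_
  rw [ENNReal.ofReal_mul ha.le, ← mul_div_assoc,
    ENNReal.mul_div_mul_left _ _ ha0 ENNReal.ofReal_ne_top]

variable {X : Type*} [MeasurableSpace X]

lemma rpow_lintegral_le (m : Measure X) {F : X → ℝ≥0∞} (hF : AEMeasurable F m) {q : ℝ}
    (hq : 1 ≤ q) :
    (∫⁻ x, F x ∂m) ^ q ≤ m univ ^ (q - 1) * ∫⁻ x, F x ^ q ∂m := by
  have hq0 : 0 < q := one_pos.trans_le hq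
  have h := eLpNorm'_le_eLpNorm'_mul_rpow_measure_univ one_pos hq hF.aestronglyMeasurable (μ := m)
  simp only [eLpNorm', enorm_eq_self, ENNReal.rpow_one, div_one] at h
  calc (∫⁻ x, F x ∂m) ^ q
      ≤ ((∫⁻ x, F x ^ q ∂m) ^ (1 / q) * m univ ^ (1 - 1 / q)) ^ q := by gcongr
    _ = m univ ^ (q - 1) * ∫⁻ x, F x ^ q ∂m := by
        rw [ENNReal.mul_rpow_of_nonneg _ _ hq0.le, ← ENNReal.rpow_mul, ← ENNReal.rpow_mul,
          one_div_mul_cancel hq0.ne', ENNReal.rpow_one, mul_comm, sub_mul,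
          one_div_mul_cancel hq0.ne', one_mul]

lemma lintegral_rpow_lintegral_comp_mul_le (m : Measure X) [SFinite m] {a : X → ℝ}
    (ham : Measurable a) (ha : ∀ᵐ x ∂m, 0 < a x) {F : ℝ → ℝ≥0∞} (hF : Measurable F)
    {q : ℝ} (hq : 1 ≤ q) :
    ∫⁻ t in Ioi (0 : ℝ), (∫⁻ x, F (a x * t) ∂m) ^ q / ENNReal.ofReal t ≤
      m univ ^ q * ∫⁻ t in Ioi (0 : ℝ), F t ^ q / ENNReal.ofReal t := by
  calc ∫⁻ t in Ioi (0 : ℝ), (∫⁻ x, F (a x * t) ∂m) ^ q / ENNReal.ofReal t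
      ≤ ∫⁻ t in Ioi (0 : ℝ),
          m univ ^ (q - 1) * ∫⁻ x, F (a x * t) ^ q / ENNReal.ofReal t ∂m := by
        refine lintegral_mono fun t => ?_
        simp only [div_eq_mul_inv]
        rw [lintegral_mul_const _ (by fun_prop), ← mul_assoc]
        gcongr
        exact rpow_lintegral_le m (by fun_prop) hq
    _ = m univ ^ (q - 1) *
          ∫⁻ t in Ioi (0 : ℝ), ∫⁻ x, F (a x * t) ^ q / ENNReal.ofReal t ∂m :=
        lintegral_const_mul _ (Measurable.lintegral_prod_right'
          (f := fun z : ℝ × X => F (a z.2 * z.1) ^ q / ENNReal.ofReal z.1) (by fun_prop))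
    _ = m univ ^ (q - 1) *
          ∫⁻ x, (∫⁻ t in Ioi (0 : ℝ), F (a x * t) ^ q / ENNReal.ofReal t) ∂m := by
        rw [lintegral_lintegral_swap (by unfold Function.uncurry; fun_prop)]
    _ = m univ ^ (q - 1) * ∫⁻ _, (∫⁻ t in Ioi (0 : ℝ), F t ^ q / ENNReal.ofReal t) ∂m := by
        congr 1
        exact lintegral_congr_ae
          (ha.mono fun x hx => lintegral_Ioi_comp_mul_div hx fun t => F t ^ q)
    _ = m univ ^ q * ∫⁻ t in Ioi (0 : ℝ), F t ^ q / ENNReal.ofReal t := by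
        have hpow : m univ ^ (q - 1) * m univ = m univ ^ q := by
          simpa using (ENNReal.rpow_add_of_nonneg (q - 1) 1 (sub_nonneg.2 hq) zero_le_one).symm
        rw [lintegral_const, mul_comm _ (m univ), ← mul_assoc, hpow]

lemma lintegral_rpow_lintegral_comp_mul_rpow_inv_le (m : Measure X) [SFinite m] {a : X → ℝ}
    (ham : Measurable a) (ha : ∀ᵐ x ∂m, 0 < a x) {F : ℝ → ℝ≥0∞} (hF : Measurable F)
    {q : ℝ} (hq : 1 ≤ q) :
    (∫⁻ t in Ioi (0 : ℝ), (∫⁻ x, F (a x * t) ∂m) ^ q / ENNReal.ofReal t) ^ q⁻¹ ≤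
      m univ * (∫⁻ t in Ioi (0 : ℝ), F t ^ q / ENNReal.ofReal t) ^ q⁻¹ := by
  have hq0 : 0 < q := one_pos.trans_le hq
  calc (∫⁻ t in Ioi (0 : ℝ), (∫⁻ x, F (a x * t) ∂m) ^ q / ENNReal.ofReal t) ^ q⁻¹
      ≤ (m univ ^ q * ∫⁻ t in Ioi (0 : ℝ), F t ^ q / ENNReal.ofReal t) ^ q⁻¹ := by
        gcongr
        exact lintegral_rpow_lintegral_comp_mul_le m ham ha hF hq
    _ = m univ * (∫⁻ t in Ioi (0 : ℝ), F t ^ q / ENNReal.ofReal t) ^ q⁻¹ := by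
        rw [ENNReal.mul_rpow_of_nonneg _ _ (inv_nonneg.2 hq0.le), ENNReal.rpow_rpow_inv hq0.ne']

lemma lintegral_comp_mul_le_iSup (m : Measure X) {a : X → ℝ} (ha : ∀ᵐ x ∂m, 0 < a x)
    (F : ℝ → ℝ≥0∞) {t : ℝ} (ht : 0 < t) :
    ∫⁻ x, F (a x * t) ∂m ≤ m univ * ⨆ τ ∈ Ioi (0 : ℝ), F τ := by
  calc ∫⁻ x, F (a x * t) ∂m ≤ ∫⁻ _, (⨆ τ ∈ Ioi (0 : ℝ), F τ) ∂m :=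
        lintegral_mono_ae (ha.mono fun x hx =>
          le_iSup₂ (f := fun τ (_ : τ ∈ Ioi (0 : ℝ)) => F τ) (a x * t) (mul_pos hx ht))
    _ = m univ * ⨆ τ ∈ Ioi (0 : ℝ), F τ := by rw [lintegral_const, mul_comm]

lemma rpow_mul_lintegral_comp_mul_eq (ν : Measure X) {a : X → ℝ} (ham : Measurable a)
    (ha : ∀ᵐ x ∂ν, 0 < a x) {K : ℝ → ℝ≥0∞} (hK : Measurable K) (r t : ℝ) :
    ENNReal.ofReal t ^ r * ∫⁻ x, K (a x * t) ∂ν =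
      ∫⁻ x, ENNReal.ofReal (a x * t) ^ r * K (a x * t)
        ∂ν.withDensity fun x => ENNReal.ofReal (a x) ^ (-r) := by
  rw [lintegral_withDensity_eq_lintegral_mul _ (by fun_prop) (by fun_prop),
    ← lintegral_const_mul _ (by fun_prop)]
  refine lintegral_congr_ae (ha.mono fun x hx => ?_)
  have hcancel : ENNReal.ofReal (a x) ^ (-r) * ENNReal.ofReal (a x) ^ r = 1 := by
    rw [← ENNReal.rpow_add _ _ (ENNReal.ofReal_pos.2 hx).ne' ENNReal.ofReal_ne_top,
      neg_add_cancel, ENNReal.rpow_zero]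
  simp only [Pi.mul_apply]
  rw [ENNReal.ofReal_mul hx.le, ENNReal.mul_rpow_of_ne_top ENNReal.ofReal_ne_top
    ENNReal.ofReal_ne_top, ← mul_assoc, ← mul_assoc,
    hcancel, one_mul]

end MulConvolution

section Lorentz

variable {α β X : Type*} [MeasurableSpace α] [MeasurableSpace β] [MeasurableSpace X]
  {p q : ℝ≥0∞}

lemma lorentz_le_of_rearr_le_lintegral {μ : Measure α} {μ' : Measure β} {h : α → ℝ} {g : β → ℝ}
    {ν : Measure X} [SFinite ν] {a : X → ℝ} (ham : Measurable a) (ha : ∀ᵐ x ∂ν, 0 < a x)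
    (hhg : ∀ t > 0, rearr μ h t ≤ ∫⁻ x, rearr μ' g (a x * t) ∂ν) (hq : 1 ≤ q) :
    lorentz μ p q h ≤
      (∫⁻ x, ENNReal.ofReal (a x) ^ (-p.toReal⁻¹) ∂ν) * lorentz μ' p q g := by
  set r := p.toReal⁻¹
  -- The scaling factor `a ^ (-r)` becomes a density, so that Jensen's inequality applies.
  set m := ν.withDensity fun x => ENNReal.ofReal (a x) ^ (-r) with hm
  set F : ℝ → ℝ≥0∞ := fun t => ENNReal.ofReal t ^ r * rearr μ' g t
  have ha_m : ∀ᵐ x ∂m, 0 < a x := (withDensity_absolutelyContinuous ν _).ae_le ha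
  have hm_univ : m univ = ∫⁻ x, ENNReal.ofReal (a x) ^ (-r) ∂ν := by
    rw [hm, withDensity_apply _ MeasurableSet.univ, Measure.restrict_univ]
  have hpoint (t : ℝ) (ht : 0 < t) :
      ENNReal.ofReal t ^ r * rearr μ h t ≤ ∫⁻ x, F (a x * t) ∂m :=
    (mul_le_mul_right (hhg t ht) _).trans_eq
      (rpow_mul_lintegral_comp_mul_eq ν ham ha (measurable_rearr μ' g) r t)
  rw [← hm_univ]
  unfold lorentz
  split_ifs with hq_top
  · exact iSup₂_le fun t ht => (hpoint t ht).trans (lintegral_comp_mul_le_iSup m ha_m F ht)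
  · have hq1 : 1 ≤ q.toReal := by simpa using ENNReal.toReal_mono hq_top hq
    refine le_trans ?_
      (lintegral_rpow_lintegral_comp_mul_rpow_inv_le m ham ha_m (F := F) (by fun_prop) hq1)
    gcongr ?_ ^ _
    refine setLIntegral_mono' measurableSet_Ioi fun t ht => ?_
    gcongr
    exact hpoint t ht

open Module

lemma lorentz_le_of_le_lintegral_comp_smul {E : Type*} [NormedAddCommGroup E] [NormedSpace ℝ E]
    [FiniteDimensional ℝ E] [MeasurableSpace E] [BorelSpace E] (μ : Measure E)
    [μ.IsAddHaarMeasure] {ν : Measure ℝ} [SFinite ν] (hν : ∀ᵐ s ∂ν, 0 < s) {g h : E → ℝ}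
    (hg : Measurable g) (hh : Measurable h)
    (hhg : ∀ x, ENNReal.ofReal |h x| ≤ ∫⁻ s, ENNReal.ofReal |g (s • x)| ∂ν) (hq : 1 ≤ q) :
    lorentz μ p q h ≤
      (∫⁻ s, ENNReal.ofReal s ^ (-(finrank ℝ E / p.toReal)) ∂ν) *
        (∫⁻ w in Ioo (0 : ℝ) 1, ENNReal.ofReal w ^ (-p.toReal⁻¹)) * lorentz μ p q g := by
  set d := finrank ℝ E
  have hpos : ∀ᵐ z ∂ν.prod (volume.restrict (Ioo (0 : ℝ) 1)), 0 < z.1 ∧ 0 < z.2 := by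
    have hw : ∀ᵐ w ∂volume.restrict (Ioo (0 : ℝ) 1), 0 < w :=
      (ae_restrict_mem measurableSet_Ioo).mono fun w hw => hw.1
    exact (Measure.quasiMeasurePreserving_fst.ae hν).and
      (Measure.quasiMeasurePreserving_snd.ae hw)
  have hrearr (t : ℝ) : rearr μ h t ≤
      ∫⁻ z, rearr μ g (z.1 ^ d * z.2 * t) ∂ν.prod (volume.restrict (Ioo 0 1)) := by
    rw [lintegral_prod _ (by fun_prop)]
    simpa only [maxRearr, mul_left_comm, mul_assoc] using
      rearr_le_lintegral_maxRearr hν hg hh hhg t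
  refine (lorentz_le_of_rearr_le_lintegral (by fun_prop)
    (hpos.mono fun z hz => mul_pos (pow_pos hz.1 d) hz.2) (fun t _ => hrearr t) hq).trans_eq ?_
  congr 1
  rw [← lintegral_prod_mul (by fun_prop) (by fun_prop)]
  refine lintegral_congr_ae (hpos.mono fun z hz => ?_)
  simp only
  rw [ENNReal.ofReal_mul (pow_pos hz.1 d).le,
    ENNReal.mul_rpow_of_ne_top ENNReal.ofReal_ne_top ENNReal.ofReal_ne_top,
    ENNReal.ofReal_pow hz.1.le, ← ENNReal.rpow_natCast, ← ENNReal.rpow_mul, mul_neg,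
    div_eq_mul_inv]

end Lorentz

lemma lintegral_Ioi_one_rpow {c : ℝ} (hc : 1 < c) :
    ∫⁻ s in Ioi (1 : ℝ), ENNReal.ofReal s ^ (-c) = ENNReal.ofReal (c - 1)⁻¹ := by
  have hc' : -c < -1 := neg_lt_neg hc
  calc ∫⁻ s in Ioi (1 : ℝ), ENNReal.ofReal s ^ (-c)
      = ∫⁻ s in Ioi (1 : ℝ), ENNReal.ofReal (s ^ (-c)) :=
        setLIntegral_congr_fun measurableSet_Ioi fun s hs =>
          ENNReal.ofReal_rpow_of_pos (one_pos.trans hs)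
    _ = ENNReal.ofReal (∫ s in Ioi (1 : ℝ), s ^ (-c)) :=
        (ofReal_integral_eq_lintegral_ofReal (integrableOn_Ioi_rpow_of_lt hc' one_pos)
          ((ae_restrict_mem measurableSet_Ioi).mono fun s hs =>
            Real.rpow_nonneg (one_pos.trans hs).le _)).symm
    _ = ENNReal.ofReal (c - 1)⁻¹ := by
        rw [integral_Ioi_rpow_of_lt hc' one_pos, Real.one_rpow, neg_div, ← one_div, ← div_neg,
          neg_add', neg_neg]

lemma lintegral_Ioo_zero_one_rpow {c : ℝ} (hc : c < 1) :
    ∫⁻ w in Ioo (0 : ℝ) 1, ENNReal.ofReal w ^ (-c) = ENNReal.ofReal (1 - c)⁻¹ := by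
  have hc' : -1 < -c := neg_lt_neg hc
  calc ∫⁻ w in Ioo (0 : ℝ) 1, ENNReal.ofReal w ^ (-c)
      = ∫⁻ w in Ioo (0 : ℝ) 1, ENNReal.ofReal (w ^ (-c)) :=
        setLIntegral_congr_fun measurableSet_Ioo fun w hw => ENNReal.ofReal_rpow_of_pos hw.1
    _ = ENNReal.ofReal (∫ w in Ioo (0 : ℝ) 1, w ^ (-c)) :=
        (ofReal_integral_eq_lintegral_ofReal
          ((intervalIntegral.integrableOn_Ioo_rpow_iff one_pos).2 hc')
          ((ae_restrict_mem measurableSet_Ioo).mono fun w hw => Real.rpow_nonneg hw.1.le _)).symm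
    _ = ENNReal.ofReal (1 - c)⁻¹ := by
        rw [← integral_Ioc_eq_integral_Ioo, ← intervalIntegral.integral_of_le zero_le_one,
          integral_rpow (Or.inl hc'), Real.one_rpow, Real.zero_rpow (by linarith), sub_zero,
          one_div, neg_add_eq_sub]

section RadialFTC

open Filter Topology

variable {F : Type*} [NormedAddCommGroup F] [NormedSpace ℝ F] [CompleteSpace F]

lemma enorm_le_lintegral_Ioi_deriv {u : ℝ → F} (hu : Differentiable ℝ u)
    (hu0 : Tendsto u atTop (𝓝 0)) (a : ℝ) :
    ‖u a‖ₑ ≤ ∫⁻ s in Ioi a, ‖deriv u s‖ₑ := by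
  by_cases hint : IntegrableOn (deriv u) (Ioi a)
  · have hFTC : ∫ s in Ioi a, deriv u s = 0 - u a :=
      integral_Ioi_of_hasDerivAt_of_tendsto' (fun s _ => (hu s).hasDerivAt) hint hu0
    rw [← enorm_neg, ← zero_sub, ← hFTC]
    exact enorm_integral_le_lintegral_enorm _
  · have hinf : ¬ ∫⁻ s in Ioi a, ‖deriv u s‖ₑ < ⊤ := fun hfin =>
      hint ⟨aestronglyMeasurable_deriv u _, hfin⟩
    exact le_top.trans_eq (not_lt_top_iff.1 hinf).symm

lemma enorm_le_enorm_mul_lintegral_fderiv_smul {E : Type*} [NormedAddCommGroup E]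
    [NormedSpace ℝ E] {f : E → F} (hf : Differentiable ℝ f) (hf0 : Tendsto f (cocompact E) (𝓝 0))
    {x : E} (hx : x ≠ 0) :
    ‖f x‖ₑ ≤ ‖x‖ₑ * ∫⁻ s in Ioi (1 : ℝ), ‖fderiv ℝ f (s • x)‖ₑ := by
  have hderiv (s : ℝ) : HasDerivAt (fun s : ℝ => f (s • x)) (fderiv ℝ f (s • x) x) s :=
    (hf (s • x)).hasFDerivAt.comp_hasDerivAt s
      (by simpa using (hasDerivAt_id s).smul_const x)
  have hlim : Tendsto (fun s : ℝ => f (s • x)) atTop (𝓝 0) :=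
    hf0.comp ((isClosedEmbedding_smul_left hx).tendsto_cocompact.mono_left atTop_le_cocompact)
  calc ‖f x‖ₑ = ‖f ((1 : ℝ) • x)‖ₑ := by rw [one_smul]
    _ ≤ ∫⁻ s in Ioi (1 : ℝ), ‖deriv (fun s : ℝ => f (s • x)) s‖ₑ :=
        enorm_le_lintegral_Ioi_deriv (fun s => (hderiv s).differentiableAt) hlim 1
    _ ≤ ∫⁻ s in Ioi (1 : ℝ), ‖x‖ₑ * ‖fderiv ℝ f (s • x)‖ₑ := by
        gcongr with s
        rw [(hderiv s).deriv, mul_comm]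
        exact ContinuousLinearMap.le_opENorm _ _
    _ = ‖x‖ₑ * ∫⁻ s in Ioi (1 : ℝ), ‖fderiv ℝ f (s • x)‖ₑ :=
        lintegral_const_mul' _ _ enorm_ne_top

end RadialFTC

open Module Filter Topology in
theorem stmt_11_general {E : Type*} [NormedAddCommGroup E] [NormedSpace ℝ E]
    [FiniteDimensional ℝ E] [MeasurableSpace E] [BorelSpace E] (μ : Measure E)
    [μ.IsAddHaarMeasure] {p : ℝ} (hp1 : 1 < p) (hpd : p < finrank ℝ E) {q : ℝ≥0∞} (hq : 1 ≤ q)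
    {f : E → ℝ} (hf : Differentiable ℝ f) (hf0 : Tendsto f (cocompact E) (𝓝 0)) :
    lorentz μ (ENNReal.ofReal p) q (fun x => f x / ‖x‖) ≤
      ENNReal.ofReal (p / (finrank ℝ E - p) * (p / (p - 1))) *
        lorentz μ (ENNReal.ofReal p) q (fun x => ‖fderiv ℝ f x‖) := by
  have hp0 : 0 < p := one_pos.trans hp1
  have hconst : ENNReal.ofReal (p / (finrank ℝ E - p) * (p / (p - 1))) =
      (∫⁻ s in Ioi (1 : ℝ), ENNReal.ofReal s ^ (-(finrank ℝ E / p))) *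
        ∫⁻ w in Ioo (0 : ℝ) 1, ENNReal.ofReal w ^ (-p⁻¹) := by
    rw [lintegral_Ioi_one_rpow ((one_lt_div hp0).2 hpd),
      lintegral_Ioo_zero_one_rpow (inv_lt_one_of_one_lt₀ hp1),
      ENNReal.ofReal_mul (div_pos hp0 (sub_pos.2 hpd)).le]
    congr 2 <;> field_simp
  have hradial (x : E) : ENNReal.ofReal |f x / ‖x‖| ≤
      ∫⁻ s in Ioi (1 : ℝ), ENNReal.ofReal |‖fderiv ℝ f (s • x)‖| := by
    rcases eq_or_ne x 0 with rfl | hx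
    · simp
    · simp only [abs_div, abs_norm, ofReal_norm, ENNReal.ofReal_div_of_pos (norm_pos_iff.2 hx),
        ← Real.enorm_eq_ofReal_abs]
      exact ENNReal.div_le_of_le_mul' (enorm_le_enorm_mul_lintegral_fderiv_smul hf hf0 hx)
  have hpos : ∀ᵐ s ∂volume.restrict (Ioi (1 : ℝ)), 0 < s :=
    (ae_restrict_mem measurableSet_Ioi).mono fun s hs => one_pos.trans hs
  have hbound := lorentz_le_of_le_lintegral_comp_smul μ (p := ENNReal.ofReal p) hpos
    (measurable_fderiv ℝ f).norm (hf.continuous.measurable.div measurable_norm) hradial hq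
  rwa [ENNReal.toReal_ofReal hp0.le, ← hconst] at hbound

/-- Hardy inequality in Lorentz spaces on ℝⁿ:
`‖|x|⁻¹ f‖_{p,q} ≤ C ‖|∇f|‖_{p,q}`. -/
theorem stmt_11 (n : ℕ) (hn : 2 ≤ n) (p : ℝ) (hp1 : 1 < p) (hpn : p < n)
    (q : ℝ≥0∞) (hq : 1 ≤ q) :
    ∃ C : ℝ, 0 < C ∧ ∀ f : EuclideanSpace ℝ (Fin n) → ℝ,
      ContDiff ℝ (⊤ : ℕ∞) f → HasCompactSupport f →
      lorentz volume (ENNReal.ofReal p) q (fun x => f x / ‖x‖) ≤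
        ENNReal.ofReal C *
          lorentz volume (ENNReal.ofReal p) q (fun x => ‖gradient f x‖) := by
  have hp0 : 0 < p := one_pos.trans hp1
  refine ⟨p / (n - p) * (p / (p - 1)),
    mul_pos (div_pos hp0 (sub_pos.2 hpn)) (div_pos hp0 (sub_pos.2 hp1)), fun f hf hc => ?_⟩
  simpa [gradient] using stmt_11_general volume hp1 (by simpa using hpn) hq
    (hf.differentiable (by simp)) hc.is_zero_at_infty
end
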